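/- Let S be a semioval of size q − 1 + a in PG(2,q) with a > 2, suppose S has an a-secant ℓ with nucleus N_ℓ, and let m ≠ ℓ be a k-secant of S. Then: (1) for every R ∈ S∖ℓ, the line RN_ℓ is not a tangent to S; (2) if k ≥ 3, then the tangents to S at the points of m ∩ S are contained in a pencil whose carrier lies on ℓ; (3) if k > (a − 1)/2, then either k = a and N_ℓ ∈ m, or k = ⌈a/2⌉ and N_ℓ ∉ m. -/

import Mathlib

/-! Common setup: the Desarguesian projective plane `PG(2,q)` over a finite field `F = GF(q)`.
Points are the projective points of `F³`; lines are the 2-dimensional linear subspaces of `F³`,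
with incidence given by containment. -/

/-- Points of `PG(2,F)`. -/
abbrev PGPoint (F : Type*) [Field F] := Projectivization F (Fin 3 → F)

/-- Lines of `PG(2,F)`: the 2-dimensional linear subspaces of `F³`. -/
abbrev PGLine (F : Type*) [Field F] := {W : Submodule F (Fin 3 → F) // Module.finrank F W = 2}

/-- Incidence between a point and a line of `PG(2,F)`. -/
def pgMem {F : Type*} [Field F] (P : PGPoint F) (L : PGLine F) : Prop :=
  P.submodule ≤ L.val

/-- The number of points of the point set `B` lying on the line `L`;
`L` is a *`k`-secant* of `B` if `nsec B L = k`, a *tangent* if `k = 1`,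
a *bisecant* if `k = 2` and a *trisecant* if `k = 3`. -/
noncomputable def nsec {F : Type*} [Field F] (B : Set (PGPoint F)) (L : PGLine F) : ℕ :=
  {P ∈ B | pgMem P L}.ncard

/-- A blocking set: a point set meeting every line. -/
def isBlocking {F : Type*} [Field F] (B : Set (PGPoint F)) : Prop :=
  ∀ L : PGLine F, ∃ P ∈ B, pgMem P L

/-- A minimal blocking set: every point is essential. -/
def isMinimalBlocking {F : Type*} [Field F] (B : Set (PGPoint F)) : Prop :=
  isBlocking B ∧ ∀ P ∈ B, ¬ isBlocking (B \ {P})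

/-- `B` is a blocking set of Rédei type with Rédei line `ℓ`: a blocking set of size
`q + N ≤ 2q` such that `ℓ` meets `B` in exactly `N = |B| − q` points. -/
def isRedeiWithLine {F : Type*} [Field F] (q : ℕ) (B : Set (PGPoint F)) (ℓ : PGLine F) : Prop :=
  isBlocking B ∧ B.ncard ≤ 2 * q ∧ nsec B ℓ + q = B.ncard

/-- A semioval: through each of its points there passes exactly one tangent. -/
def isSemioval {F : Type*} [Field F] (S : Set (PGPoint F)) : Prop :=
  ∀ P ∈ S, ∃! t : PGLine F, pgMem P t ∧ nsec S t = 1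

open Finset Polynomial

section Incidence

variable {F : Type*} [Field F]

lemma pgMem_iff_rep_mem (P : PGPoint F) (L : PGLine F) : pgMem P L ↔ P.rep ∈ L.val := by
  rw [pgMem, Projectivization.submodule_eq, Submodule.span_singleton_le_iff_mem]

lemma pgMem_mk_iff {v : Fin 3 → F} (hv : v ≠ 0) (L : PGLine F) :
    pgMem (Projectivization.mk F v hv) L ↔ v ∈ L.val := by
  rw [pgMem, Projectivization.submodule_mk, Submodule.span_singleton_le_iff_mem]

lemma finrank_span_pair_rep {P Q : PGPoint F} (h : P ≠ Q) :
    Module.finrank F (Submodule.span F {P.rep, Q.rep}) = 2 := by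
  have hli : LinearIndependent F ![P.rep, Q.rep] :=
    Projectivization.linearIndependent_pair_iff_ne.mpr h
  have := finrank_span_eq_card hli
  rwa [Matrix.range_cons_cons_empty, Fintype.card_fin] at this

lemma exists_line_through {P Q : PGPoint F} (h : P ≠ Q) :
    ∃ L : PGLine F, pgMem P L ∧ pgMem Q L := by
  refine ⟨⟨Submodule.span F {P.rep, Q.rep}, finrank_span_pair_rep h⟩, ?_, ?_⟩ <;>
    rw [pgMem_iff_rep_mem] <;> exact Submodule.subset_span (by simp)

lemma line_unique {P Q : PGPoint F} (h : P ≠ Q) {L L' : PGLine F}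
    (hP : pgMem P L) (hQ : pgMem Q L) (hP' : pgMem P L') (hQ' : pgMem Q L') : L = L' := by
  have key : ∀ K : PGLine F, pgMem P K → pgMem Q K →
      Submodule.span F {P.rep, Q.rep} = K.val := by
    intro K hPK hQK
    rw [pgMem_iff_rep_mem] at hPK hQK
    refine Submodule.eq_of_le_of_finrank_eq ?_ ((finrank_span_pair_rep h).trans K.2.symm)
    rw [Submodule.span_le]
    rintro v (rfl | rfl) <;> assumption
  exact Subtype.ext ((key L hP hQ).symm.trans (key L' hP' hQ'))

lemma exists_common_point (L L' : PGLine F) : ∃ P : PGPoint F, pgMem P L ∧ pgMem P L' := by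
  have h := Submodule.finrank_sup_add_finrank_inf_eq L.val L'.val
  have h3 : Module.finrank F (L.val ⊔ L'.val : Submodule F (Fin 3 → F)) ≤ 3 := by
    simpa using Submodule.finrank_le (L.val ⊔ L'.val)
  have hpos : (L.val ⊓ L'.val) ≠ ⊥ := by
    intro h0
    rw [h0, L.2, L'.2, finrank_bot] at h
    omega
  obtain ⟨v, hv, hv0⟩ := Submodule.exists_mem_ne_zero_of_ne_bot hpos
  exact ⟨Projectivization.mk F v hv0, (pgMem_mk_iff hv0 L).mpr hv.1, (pgMem_mk_iff hv0 L').mpr hv.2⟩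

lemma common_point_unique {L L' : PGLine F} (h : L ≠ L') {P Q : PGPoint F}
    (hP : pgMem P L) (hP' : pgMem P L') (hQ : pgMem Q L) (hQ' : pgMem Q L') : P = Q := by
  by_contra hne
  exact h (line_unique hne hP hQ hP' hQ')

/-- Affine coordinates on the complement of the line `ℓ`: the points of `ℓ` other than `M` are
the slopes `dir t`, and `M` is the vertical direction. -/
structure AffineChart (ℓ : PGLine F) (M : PGPoint F) where
  /-- The abscissa of an affine point. -/
  x : PGPoint F → F
  /-- The ordinate of an affine point. -/
  y : PGPoint F → F
  /-- The point of `ℓ` on the lines of slope `t`. -/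
  dir : F → PGPoint F
  dir_mem : ∀ t, pgMem (dir t) ℓ
  dir_ne : ∀ t, dir t ≠ M
  dir_injective : Function.Injective dir
  exists_dir_eq : ∀ P, pgMem P ℓ → P ≠ M → ∃ t, dir t = P
  exists_line : ∀ t c, ∃ L : PGLine F, L ≠ ℓ ∧ pgMem (dir t) L ∧
    ∀ Q, ¬ pgMem Q ℓ → (pgMem Q L ↔ y Q - t * x Q = c)
  exists_vertical : ∀ c, ∃ L : PGLine F, pgMem M L ∧
    ∀ Q, ¬ pgMem Q ℓ → (pgMem Q L ↔ x Q = c)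

lemma exists_basis_adapted {ℓ : PGLine F} {M : PGPoint F} (hM : pgMem M ℓ) :
    ∃ b : Module.Basis (Fin 3) F (Fin 3 → F), b 1 = M.rep ∧ ∀ v, v ∈ ℓ.val ↔ b.coord 2 v = 0 := by
  rw [pgMem_iff_rep_mem] at hM
  obtain ⟨w, hw, hwM⟩ : ∃ w ∈ ℓ.val, w ∉ Submodule.span F {M.rep} := by
    by_contra! hcon
    have := Submodule.finrank_mono (show ℓ.val ≤ Submodule.span F {M.rep} from hcon)
    rw [finrank_span_singleton M.rep_nonzero, ℓ.2] at this
    omega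
  obtain ⟨u, hu⟩ : ∃ u, u ∉ ℓ.val := by
    by_contra! hcon
    have htop : ℓ.val = ⊤ := Submodule.eq_top_iff'.mpr hcon
    have h2 := ℓ.2
    rw [htop, finrank_top] at h2
    simp at h2
  have hli : LinearIndependent F ![w, M.rep] :=
    linearIndependent_finCons.mpr ⟨LinearIndependent.of_subsingleton 0 M.rep_nonzero, by
      simpa [Matrix.range_cons] using hwM⟩
  have hspan : Submodule.span F (Set.range ![w, M.rep]) ≤ ℓ.val := by
    rw [Submodule.span_le]
    rintro _ ⟨i, rfl⟩
    fin_cases i <;> simpa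
  have hli3 : LinearIndependent F ![w, M.rep, u] := by
    have h := linearIndependent_finSnoc.mpr ⟨hli, fun h => hu (hspan h)⟩
    have hsnoc : ![w, M.rep, u] = Fin.snoc ![w, M.rep] u := by
      ext i
      fin_cases i <;> rfl
    rwa [hsnoc]
  let b := basisOfLinearIndependentOfCardEqFinrank hli3 (by simp)
  have hb : ⇑b = ![w, M.rep, u] := coe_basisOfLinearIndependentOfCardEqFinrank _ _
  refine ⟨b, by simp [hb], fun v => ?_⟩
  have hv := b.sum_repr v
  rw [Fin.sum_univ_three, hb] at hv
  simp only [Matrix.cons_val] at hv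
  have h01 : b.repr v 0 • w + b.repr v 1 • M.rep ∈ ℓ.val :=
    add_mem (Submodule.smul_mem _ _ hw) (Submodule.smul_mem _ _ hM)
  rw [Module.Basis.coord_apply]
  constructor
  · intro hvl
    by_contra hne
    have h2 : b.repr v 2 • u ∈ ℓ.val := by
      rw [← hv] at hvl
      exact (Submodule.add_mem_iff_right _ h01).mp hvl
    exact hu ((Submodule.smul_mem_iff _ hne).mp h2)
  · intro h0
    rw [← hv, h0, zero_smul, add_zero]
    exact h01

/-- The line which is the kernel of a nonzero linear functional. -/
def kerLine (f : (Fin 3 → F) →ₗ[F] F) (hf : f ≠ 0) : PGLine F :=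
  ⟨LinearMap.ker f, by
    have := Module.Dual.finrank_ker_add_one_of_ne_zero (f := f) hf
    simp only [Module.finrank_fin_fun] at this
    omega⟩

lemma nonempty_affineChart {ℓ : PGLine F} {M : PGPoint F} (hM : pgMem M ℓ) :
    Nonempty (AffineChart ℓ M) := by
  obtain ⟨b, hbM, hbℓ⟩ := exists_basis_adapted hM
  have hc : ∀ i j, b.coord i (b j) = if j = i then 1 else 0 := fun i j => by
    simp [Module.Basis.coord_apply, Finsupp.single_apply]
  have hne : ∀ t : F, b 0 + t • b 1 ≠ 0 := fun t h => by
    have := congrArg (b.coord 0) h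
    simp at this
  have hMmk : M = Projectivization.mk F (b 1) (b.ne_zero 1) := by
    simp only [hbM, Projectivization.mk_rep]
  have hz : ∀ Q : PGPoint F, ¬ pgMem Q ℓ → b.coord 2 Q.rep ≠ 0 := fun Q hQ h =>
    hQ ((pgMem_iff_rep_mem Q ℓ).mpr ((hbℓ _).mpr h))
  refine ⟨⟨fun Q => b.coord 0 Q.rep / b.coord 2 Q.rep, fun Q => b.coord 1 Q.rep / b.coord 2 Q.rep,
    fun t => Projectivization.mk F (b 0 + t • b 1) (hne t), ?_, ?_, ?_, ?_, ?_, ?_⟩⟩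
  · intro t
    rw [pgMem_mk_iff, hbℓ]
    simp
  · intro t h
    rw [hMmk, Projectivization.mk_eq_mk_iff'] at h
    obtain ⟨s, hs⟩ := h
    have := congrArg (b.coord 0) hs
    simp at this
  · intro t t' h
    rw [Projectivization.mk_eq_mk_iff'] at h
    obtain ⟨s, hs⟩ := h
    have h0 := congrArg (b.coord 0) hs
    have h1 := congrArg (b.coord 1) hs
    simp at h0 h1
    rw [← h1, h0, one_mul]
  · intro P hP hPM
    rw [pgMem_iff_rep_mem, hbℓ, Module.Basis.coord_apply] at hP
    have hv := b.sum_repr P.rep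
    rw [Fin.sum_univ_three, hP, zero_smul, add_zero] at hv
    have h0 : b.repr P.rep 0 ≠ 0 := by
      intro h0
      rw [h0, zero_smul, zero_add] at hv
      apply hPM
      rw [hMmk, ← Projectivization.mk_rep P, Projectivization.mk_eq_mk_iff']
      exact ⟨_, hv⟩
    refine ⟨b.repr P.rep 1 / b.repr P.rep 0, ?_⟩
    conv_rhs => rw [← Projectivization.mk_rep P]
    rw [Projectivization.mk_eq_mk_iff']
    refine ⟨(b.repr P.rep 0)⁻¹, ?_⟩
    nth_rw 2 [← hv]
    rw [smul_add, smul_smul, smul_smul, inv_mul_cancel₀ h0, one_smul, div_eq_inv_mul]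
  · intro t c
    have hf : b.coord 1 - t • b.coord 0 - c • b.coord 2 ≠ 0 := fun h => by
      have := congrArg (fun g => g (b 1)) h
      simp [hc] at this
    have hdir : pgMem (Projectivization.mk F (b 0 + t • b 1) (hne t)) (kerLine _ hf) := by
      rw [pgMem_mk_iff, kerLine, LinearMap.mem_ker]
      simp
    refine ⟨kerLine _ hf, ?_, hdir, ?_⟩
    · intro h
      have h1 : b 1 ∈ (kerLine _ hf).val := by
        rw [h, hbℓ]
        simp
      rw [kerLine, LinearMap.mem_ker] at h1
      simp [hc] at h1
    · intro Q hQ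
      rw [pgMem_iff_rep_mem, kerLine, LinearMap.mem_ker]
      have := hz Q hQ
      simp only [LinearMap.sub_apply, LinearMap.smul_apply, smul_eq_mul]
      field_simp
      constructor <;> intro h <;> linear_combination h
  · intro c
    have hf : b.coord 0 - c • b.coord 2 ≠ 0 := fun h => by
      have := congrArg (fun g => g (b 0)) h
      simp [hc] at this
    refine ⟨kerLine _ hf, ?_, ?_⟩
    · rw [hMmk, pgMem_mk_iff, kerLine, LinearMap.mem_ker]
      simp [hc]
    · intro Q hQ
      rw [pgMem_iff_rep_mem, kerLine, LinearMap.mem_ker]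
      have := hz Q hQ
      simp only [LinearMap.sub_apply, LinearMap.smul_apply, smul_eq_mul]
      rw [div_eq_iff this, sub_eq_zero]

namespace AffineChart

variable {ℓ : PGLine F} {M : PGPoint F} (χ : AffineChart ℓ M)

lemma mem_line_iff {t : F} {Q R : PGPoint F} {L : PGLine F} (hQ : ¬ pgMem Q ℓ) (hR : ¬ pgMem R ℓ)
    (hRL : pgMem R L) (htL : pgMem (χ.dir t) L) :
    pgMem Q L ↔ χ.y Q - t * χ.x Q = χ.y R - t * χ.x R := by
  obtain ⟨K, -, htK, hK⟩ := χ.exists_line t (χ.y R - t * χ.x R)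
  have hne : R ≠ χ.dir t := fun h => hR (h ▸ χ.dir_mem t)
  rw [line_unique hne hRL htL ((hK R hR).mpr rfl) htK, hK Q hQ]

lemma mem_vertical_iff {Q R : PGPoint F} {L : PGLine F} (hM : pgMem M ℓ) (hQ : ¬ pgMem Q ℓ)
    (hR : ¬ pgMem R ℓ) (hRL : pgMem R L) (hML : pgMem M L) : pgMem Q L ↔ χ.x Q = χ.x R := by
  obtain ⟨K, hMK, hK⟩ := χ.exists_vertical (χ.x R)
  have hne : R ≠ M := fun h => hR (h ▸ hM)
  rw [line_unique hne hRL hML ((hK R hR).mpr rfl) hMK, hK Q hQ]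

end AffineChart

lemma exists_ne_point_on (ℓ : PGLine F) (P : PGPoint F) : ∃ M, pgMem M ℓ ∧ M ≠ P := by
  obtain ⟨P', hP'⟩ := exists_common_point ℓ ℓ
  obtain ⟨χ⟩ := nonempty_affineChart hP'.1
  by_cases h : P' = P
  · exact ⟨χ.dir 0, χ.dir_mem 0, h ▸ χ.dir_ne 0⟩
  · exact ⟨P', hP'.1, h⟩

open Classical in
lemma card_points_on [Fintype F] [Fintype (PGPoint F)] (ℓ : PGLine F) :
    #{P : PGPoint F | pgMem P ℓ} = Fintype.card F + 1 := by
  obtain ⟨M, hM, -⟩ := exists_common_point ℓ ℓ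
  obtain ⟨χ⟩ := nonempty_affineChart hM
  have h : ({P : PGPoint F | pgMem P ℓ} : Finset _) = insert M (univ.image χ.dir) := by
    ext P
    simp only [mem_filter, mem_univ, true_and, mem_insert, mem_image]
    constructor
    · intro hP
      by_cases hPM : P = M
      · exact Or.inl hPM
      · exact Or.inr (χ.exists_dir_eq P hP hPM)
    · rintro (rfl | ⟨t, rfl⟩)
      · exact hM
      · exact χ.dir_mem t
  rw [h, card_insert_of_notMem, card_image_of_injective _ χ.dir_injective, card_univ]
  simp [χ.dir_ne]

end Incidence

section SlopePolynomial

variable {F : Type*} [Field F]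

lemma sum_eval_eq_zero_of_natDegree_lt [Fintype F] {f : F[X]}
    (hf : f.natDegree < Fintype.card F - 1) : ∑ t : F, f.eval t = 0 := by
  simp_rw [eval_eq_sum_range' hf]
  rw [sum_comm]
  refine sum_eq_zero fun i hi => ?_
  rw [← mul_sum, FiniteField.sum_pow_lt_card_sub_one F i (mem_range.mp hi), mul_zero]

lemma prod_erase_zero_eq_neg_one [Fintype F] [DecidableEq F] :
    ∏ c ∈ (univ : Finset F).erase 0, c = -1 := by
  have h := congrArg (Units.val : Fˣ → F) (FiniteField.prod_univ_units_id_eq_neg_one (K := F))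
  rw [Units.coe_prod, Units.val_neg, Units.val_one] at h
  rw [← h]
  symm
  refine prod_bij (fun u _ => (u : F)) (by simp) (fun _ _ _ _ h => Units.ext h) ?_ (by simp)
  intro c hc
  exact ⟨Units.mk0 c (mem_erase.mp hc).1, mem_univ _, rfl⟩

variable {ι : Type*} [DecidableEq ι]

/-- The product over `Q ∈ V`, `Q ≠ R`, of the linear polynomials in the slope `t` vanishing when
`Q` and `R` lie on a line of slope `t`. -/
noncomputable def slopePoly (V : Finset ι) (x y : ι → F) (R : ι) : F[X] :=
  ∏ Q ∈ V.erase R, (C (y Q - y R) - C (x Q - x R) * X)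

variable {V : Finset ι} {x y : ι → F} {R : ι}

lemma eval_slopePoly (t : F) : (slopePoly V x y R).eval t =
    ∏ Q ∈ V.erase R, ((y Q - t * x Q) - (y R - t * x R)) := by
  rw [slopePoly, eval_prod]
  refine prod_congr rfl fun Q _ => ?_
  simp only [eval_sub, eval_C, eval_mul, eval_X]
  ring

lemma eval_slopePoly_eq_zero_iff (t : F) : (slopePoly V x y R).eval t = 0 ↔
    ∃ Q ∈ V, Q ≠ R ∧ y Q - t * x Q = y R - t * x R := by
  rw [eval_slopePoly, prod_eq_zero_iff]
  simp only [mem_erase, sub_eq_zero]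
  exact ⟨fun ⟨Q, ⟨h1, h2⟩, h3⟩ => ⟨Q, h2, h1, h3⟩, fun ⟨Q, h1, h2, h3⟩ => ⟨Q, ⟨h2, h1⟩, h3⟩⟩

lemma eval_slopePoly_eq_neg_one [Fintype F] (hV : #V = Fintype.card F) (hR : R ∈ V) {t : F}
    (hinj : Set.InjOn (fun Q => y Q - t * x Q) V) : (slopePoly V x y R).eval t = -1 := by
  classical
  rw [eval_slopePoly, ← prod_erase_zero_eq_neg_one]
  have hinj' : Set.InjOn (fun Q => (y Q - t * x Q) - (y R - t * x R)) V := fun Q hQ Q' hQ' h =>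
    hinj hQ hQ' (sub_left_injective h)
  have himg : V.image (fun Q => (y Q - t * x Q) - (y R - t * x R)) = univ := by
    rw [← card_eq_iff_eq_univ, card_image_of_injOn hinj', hV]
  rw [← himg]
  refine prod_bij (fun Q _ => (y Q - t * x Q) - (y R - t * x R)) ?_ ?_ ?_ (by simp)
  · intro Q hQ
    rw [mem_erase] at hQ ⊢
    refine ⟨fun h => hQ.1 (hinj hQ.2 hR (sub_eq_zero.mp h)), mem_image_of_mem _ hQ.2⟩
  · intro Q hQ Q' hQ' h
    exact hinj' (mem_of_mem_erase hQ) (mem_of_mem_erase hQ') h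
  · intro c hc
    rw [mem_erase, mem_image] at hc
    obtain ⟨hc0, Q, hQ, rfl⟩ := hc
    exact ⟨Q, mem_erase.mpr ⟨fun h => hc0 (by rw [h, sub_self]), hQ⟩, rfl⟩

lemma natDegree_slopePoly_add_card_le [DecidableEq F] :
    (slopePoly V x y R).natDegree + #{Q ∈ V | x Q = x R} ≤ #V := by
  have h1 : (slopePoly V x y R).natDegree ≤ #{Q ∈ V | x Q ≠ x R} := by
    refine (natDegree_prod_le _ _).trans ?_
    calc ∑ Q ∈ V.erase R, (C (y Q - y R) - C (x Q - x R) * X).natDegree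
        ≤ ∑ Q ∈ V.erase R, if x Q ≠ x R then 1 else 0 := by
          refine sum_le_sum fun Q _ => ?_
          split_ifs with h
          · compute_degree
          · rw [not_not.mp h]
            simp
      _ ≤ ∑ Q ∈ V, if x Q ≠ x R then 1 else 0 :=
          sum_le_sum_of_subset (erase_subset _ _)
      _ = #{Q ∈ V | x Q ≠ x R} := (card_filter _ _).symm
  have h2 := card_filter_add_card_filter_not (s := V) (fun Q => x Q = x R)
  simp only [← ne_eq] at h2
  omega

lemma count_roots_slope_factor [DecidableEq F] {b c t : F} (h : C b - C c * X ≠ 0) :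
    (C b - C c * X : F[X]).roots.count t = if b = t * c then 1 else 0 := by
  by_cases hc : c = 0
  · subst hc
    have hb : b ≠ 0 := fun hb => h (by simp [hb])
    simp [hb]
  · have hfac : (C b - C c * X : F[X]) = C (-c) * (X - C (b / c)) := by
      rw [mul_sub, ← C_mul, neg_mul, mul_div_cancel₀ b hc, C_neg, C_neg]
      ring
    rw [hfac, roots_C_mul _ (neg_ne_zero.mpr hc), roots_X_sub_C, Multiset.count_singleton]
    simp only [eq_div_iff hc, eq_comm]

lemma rootMultiplicity_slopePoly_add_one [DecidableEq F] (hR : R ∈ V)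
    (h0 : slopePoly V x y R ≠ 0) (t : F) :
    (slopePoly V x y R).rootMultiplicity t + 1 = #{Q ∈ V | y Q - t * x Q = y R - t * x R} := by
  rw [← count_roots, slopePoly, roots_prod _ _ h0, Multiset.count_bind]
  rw [slopePoly, prod_ne_zero_iff] at h0
  change (∑ Q ∈ V.erase R, (C (y Q - y R) - C (x Q - x R) * X).roots.count t) + 1 = _
  rw [sum_congr rfl fun Q hQ => count_roots_slope_factor (h0 Q hQ), ← card_filter,
    ← card_erase_add_one (s := {Q ∈ V | y Q - t * x Q = y R - t * x R}) (a := R)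
      (by simp [hR])]
  congr 2
  ext Q
  simp only [mem_filter, mem_erase]
  constructor
  · rintro ⟨⟨h1, h2⟩, h3⟩
    exact ⟨h1, h2, by linear_combination h3⟩
  · rintro ⟨h1, h2, h3⟩
    exact ⟨⟨h1, h2⟩, by linear_combination h3⟩

/-- If `V` has at least two points on the vertical line through `R`, the values of the slope
polynomial sum up to zero. -/
lemma sum_eval_slopePoly_eq_zero [Fintype F] [DecidableEq F] (hV : #V = Fintype.card F)
    (h2 : 2 ≤ #{Q ∈ V | x Q = x R}) :
    ∑ t : F, (slopePoly V x y R).eval t = 0 := by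
  have h := natDegree_slopePoly_add_card_le (V := V) (x := x) (y := y) (R := R)
  exact sum_eval_eq_zero_of_natDegree_lt (by omega)

lemma sum_mul_eval_slopePoly_eq_zero [Fintype F] [DecidableEq F] (hV : #V = Fintype.card F)
    (h3 : 3 ≤ #{Q ∈ V | x Q = x R}) :
    ∑ t : F, t * (slopePoly V x y R).eval t = 0 := by
  have h := natDegree_slopePoly_add_card_le (V := V) (x := x) (y := y) (R := R)
  have hdeg : (X * slopePoly V x y R).natDegree < Fintype.card F - 1 := by
    have := natDegree_mul_le (p := (X : F[X])) (q := slopePoly V x y R)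
    rw [natDegree_X] at this
    omega
  simpa using sum_eval_eq_zero_of_natDegree_lt hdeg

/-- If the slope polynomial at `R` is `-1` on `D` and vanishes outside `D ∪ {d}`, and `V` has at
least three points on the vertical line through `R`, then its value at `d` is `|D|`, and
`|D| d` is the sum of `D`. -/
lemma slopePoly_eval_tangent [Fintype F] [DecidableEq F] (hV : #V = Fintype.card F)
    (h3 : 3 ≤ #{Q ∈ V | x Q = x R}) {D : Finset F} {d : F} (hd : d ∉ D)
    (hD : ∀ t ∈ D, (slopePoly V x y R).eval t = -1)
    (hout : ∀ t ∉ D, t ≠ d → (slopePoly V x y R).eval t = 0) :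
    (slopePoly V x y R).eval d = #D ∧ (#D : F) * d = ∑ t ∈ D, t := by
  have hsplit : ∀ g : F → F, (∀ t ∉ D, t ≠ d → g t = 0) →
      ∑ t, g t = g d + ∑ t ∈ D, g t := by
    intro g hg
    rw [← sum_insert hd]
    symm
    refine sum_subset (subset_univ _) fun t _ ht => ?_
    rw [mem_insert, not_or] at ht
    exact hg t ht.2 ht.1
  have e1 := sum_eval_slopePoly_eq_zero (x := x) (y := y) (R := R) hV (by omega)
  have e2 := sum_mul_eval_slopePoly_eq_zero (y := y) hV h3
  rw [hsplit _ hout, sum_congr rfl hD] at e1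
  rw [hsplit _ (fun t h h' => by rw [hout t h h', mul_zero]),
    sum_congr rfl (fun t ht => by rw [hD t ht])] at e2
  simp only [sum_const, nsmul_eq_mul] at e1
  rw [← sum_mul] at e2
  have e3 : (slopePoly V x y R).eval d = #D := by linear_combination e1
  rw [e3] at e2
  exact ⟨e3, by linear_combination e2⟩

end SlopePolynomial

section Configuration

open scoped Classical

variable {F : Type*} [Field F]

/-- The line `t` through `R` meets `V ∖ {N}` only in `R` and avoids `D`. -/
def IsTangentAt (V D : Finset (PGPoint F)) (N R : PGPoint F) (t : PGLine F) : Prop :=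
  pgMem R t ∧ (∀ P ∈ D, ¬ pgMem P t) ∧ ∀ Q ∈ V, Q ≠ N → pgMem Q t → Q = R

/-- The affine set `V` of `q` points determines no direction in the subset `D` of the line `ℓ`,
and each point of `V ∖ {N}` lies on a unique tangent of `(V ∖ {N}) ∪ D`. -/
structure NucleusConfig [Fintype F] (ℓ : PGLine F) (V D : Finset (PGPoint F)) (N : PGPoint F) :
    Prop where
  nucleus_mem : N ∈ V
  card_eq : #V = Fintype.card F
  notMem_line : ∀ Q ∈ V, ¬ pgMem Q ℓ
  mem_line : ∀ P ∈ D, pgMem P ℓ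
  eq_of_mem : ∀ P ∈ D, ∀ Q ∈ V, ∀ R ∈ V, ∀ L : PGLine F,
    pgMem P L → pgMem Q L → pgMem R L → Q = R
  existsUnique_tangent : ∀ R ∈ V, R ≠ N → ∃! t, IsTangentAt V D N R t

/-- The number of points of `V` on the line `L`. -/
noncomputable def lineCount (V : Finset (PGPoint F)) (L : PGLine F) : ℕ := #{Q ∈ V | pgMem Q L}

namespace NucleusConfig

variable [Fintype F] {ℓ : PGLine F} {V D : Finset (PGPoint F)} {N : PGPoint F}

lemma ne_of_mem (h : NucleusConfig ℓ V D N) {R P : PGPoint F} (hR : R ∈ V) (hP : pgMem P ℓ) :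
    R ≠ P := fun e =>
  h.notMem_line R hR (e ▸ hP)

lemma line_ne (h : NucleusConfig ℓ V D N) {R : PGPoint F} (hR : R ∈ V) {L : PGLine F}
    (hL : pgMem R L) : L ≠ ℓ := fun e =>
  h.notMem_line R hR (e ▸ hL)

lemma eval_slopePoly_of_dir_mem (h : NucleusConfig ℓ V D N) {M : PGPoint F}
    (χ : AffineChart ℓ M) {R : PGPoint F} (hR : R ∈ V)
    {t : F} (ht : χ.dir t ∈ D) : (slopePoly V χ.x χ.y R).eval t = -1 := by
  refine eval_slopePoly_eq_neg_one h.card_eq hR fun Q hQ Q' hQ' e => ?_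
  obtain ⟨L, hQ'L, htL⟩ := exists_line_through (h.ne_of_mem hQ' (χ.dir_mem t))
  exact h.eq_of_mem _ ht Q hQ Q' hQ' L htL
    ((χ.mem_line_iff (h.notMem_line Q hQ) (h.notMem_line Q' hQ') hQ'L htL).mpr e) hQ'L

lemma eval_slopePoly_eq_zero_iff (h : NucleusConfig ℓ V D N) {M : PGPoint F}
    (χ : AffineChart ℓ M) {R : PGPoint F}
    (hR : R ∈ V) {t : F} {L : PGLine F} (hRL : pgMem R L) (htL : pgMem (χ.dir t) L) :
    (slopePoly V χ.x χ.y R).eval t = 0 ↔ ∃ Q ∈ V, Q ≠ R ∧ pgMem Q L := by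
  rw [_root_.eval_slopePoly_eq_zero_iff]
  refine exists_congr fun Q => and_congr_right fun hQ => and_congr_right fun _ => ?_
  rw [χ.mem_line_iff (h.notMem_line Q hQ) (h.notMem_line R hR) hRL htL]

lemma isTangentAt_of_eval_ne_zero (h : NucleusConfig ℓ V D N) {M : PGPoint F}
    (χ : AffineChart ℓ M) {R : PGPoint F}
    (hR : R ∈ V) {t : F} {L : PGLine F} (hRL : pgMem R L) (htL : pgMem (χ.dir t) L)
    (htD : χ.dir t ∉ D) (h0 : (slopePoly V χ.x χ.y R).eval t ≠ 0) : IsTangentAt V D N R L := by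
  refine ⟨hRL, fun P hP hPL => htD ?_, fun Q hQ _ hQL => ?_⟩
  · rwa [common_point_unique (h.line_ne hR hRL) htL (χ.dir_mem t) hPL (h.mem_line P hP)]
  · by_contra hne
    exact h0 ((h.eval_slopePoly_eq_zero_iff χ hR hRL htL).mpr ⟨Q, hQ, hne, hQL⟩)

lemma card_filter_dir (hDℓ : ∀ P ∈ D, pgMem P ℓ) {M : PGPoint F} (χ : AffineChart ℓ M)
    (hM : M ∉ D) : #{t | χ.dir t ∈ D} = #D := by
  refine card_bij (fun t _ => χ.dir t) (by simp) (fun _ _ _ _ e => χ.dir_injective e) ?_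
  intro P hP
  obtain ⟨t, rfl⟩ := χ.exists_dir_eq P (hDℓ P hP) (fun e => hM (e ▸ hP))
  exact ⟨t, by simpa using hP, rfl⟩

lemma lineCount_vertical (h : NucleusConfig ℓ V D N) {M : PGPoint F} (χ : AffineChart ℓ M)
    (hM : pgMem M ℓ) {R : PGPoint F}
    (hR : R ∈ V) {L : PGLine F} (hRL : pgMem R L) (hML : pgMem M L) :
    #{Q ∈ V | χ.x Q = χ.x R} = lineCount V L := by
  rw [lineCount]
  congr 1
  refine filter_congr fun Q hQ => ?_
  rw [χ.mem_vertical_iff hM (h.notMem_line Q hQ) (h.notMem_line R hR) hRL hML]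

lemma notMem_of_two_points (h : NucleusConfig ℓ V D N) {Q R P : PGPoint F} (hQ : Q ∈ V)
    (hR : R ∈ V) (hne : Q ≠ R)
    {L : PGLine F} (hQL : pgMem Q L) (hRL : pgMem R L) (hPL : pgMem P L) : P ∉ D := fun hP =>
  hne (h.eq_of_mem P hP Q hQ R hR L hPL hQL hRL)

/-- A tangent passes through the nucleus exactly when the characteristic divides `|D|`. -/
lemma nucleus_mem_tangent_iff (h : NucleusConfig ℓ V D N) {R : PGPoint F} (hR : R ∈ V)
    (hRN : R ≠ N) {t : PGLine F}
    (ht : IsTangentAt V D N R t) : pgMem N t ↔ (#D : F) = 0 := by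
  obtain ⟨L, hRL, hNL⟩ := exists_line_through hRN
  obtain ⟨M, hML, hM⟩ := exists_common_point L ℓ
  have hMD : M ∉ D := h.notMem_of_two_points hR h.nucleus_mem hRN hRL hNL hML
  obtain ⟨χ⟩ := nonempty_affineChart hM
  have hsum : ∑ s, (slopePoly V χ.x χ.y R).eval s = 0 := by
    refine sum_eval_slopePoly_eq_zero h.card_eq ?_
    rw [h.lineCount_vertical χ hM hR hRL hML]
    refine (card_pair hRN).symm.le.trans (card_le_card ?_)
    intro Q hQ
    rw [mem_insert, mem_singleton] at hQ
    rcases hQ with rfl | rfl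
    · exact mem_filter.mpr ⟨hR, hRL⟩
    · exact mem_filter.mpr ⟨h.nucleus_mem, hNL⟩
  have hsumD : ∑ s with χ.dir s ∈ D, (slopePoly V χ.x χ.y R).eval s = -(#D : F) := by
    rw [sum_congr rfl fun s hs => h.eval_slopePoly_of_dir_mem χ hR (mem_filter.mp hs).2, sum_const,
      card_filter_dir h.mem_line χ hMD, nsmul_eq_mul, mul_neg, mul_one]
  rw [← sum_filter_add_sum_filter_not univ (fun s => χ.dir s ∈ D), hsumD, neg_add_eq_zero] at hsum
  have hdir : ∀ s, χ.dir s ∉ D → (slopePoly V χ.x χ.y R).eval s ≠ 0 → pgMem (χ.dir s) t := by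
    intro s hs h0
    obtain ⟨K, hRK, hsK⟩ := exists_line_through (h.ne_of_mem hR (χ.dir_mem s))
    have hK := h.isTangentAt_of_eval_ne_zero χ hR hRK hsK hs h0
    rwa [(h.existsUnique_tangent R hR hRN).unique ht hK]
  rw [hsum]
  constructor
  · intro hNt
    have htL : t = L := line_unique hRN ht.1 hNt hRL hNL
    refine sum_eq_zero fun s hs => ?_
    by_contra h0
    have hs' := hdir s (mem_filter.mp hs).2 h0
    rw [htL] at hs'
    exact χ.dir_ne s (common_point_unique (h.line_ne hR hRL) hs' (χ.dir_mem s) hML hM)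
  · intro h0
    by_contra hNt
    obtain ⟨d, hdt, hd⟩ := exists_common_point t ℓ
    have hdM : d ≠ M := by
      rintro rfl
      exact hNt (line_unique (h.ne_of_mem hR hM) ht.1 hdt hRL hML ▸ hNL)
    obtain ⟨s, rfl⟩ := χ.exists_dir_eq d hd hdM
    have hsD : χ.dir s ∉ D := fun hs => ht.2.1 _ hs hdt
    rw [sum_eq_single s] at h0
    · obtain ⟨Q, hQ, hQR, hQt⟩ := (h.eval_slopePoly_eq_zero_iff χ hR ht.1 hdt).mp h0
      refine hQR (ht.2.2 Q hQ ?_ hQt)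
      rintro rfl
      exact hNt hQt
    · intro u hu hus
      by_contra hu0
      exact hus (χ.dir_injective (common_point_unique (h.line_ne hR ht.1)
        (hdir u (mem_filter.mp hu).2 hu0) (χ.dir_mem u) hdt (χ.dir_mem s)))
    · intro hs
      exact absurd (mem_filter.mpr ⟨mem_univ s, hsD⟩) hs

lemma card_cast_ne_zero (h : NucleusConfig ℓ V D N) (hD : 2 < #D) : (#D : F) ≠ 0 := by
  intro h0
  have hex : ∀ R, ∃ d, R ∈ V.erase N → pgMem d ℓ ∧ d ∉ D ∧
      ∃ t, IsTangentAt V D N R t ∧ pgMem N t ∧ pgMem d t := by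
    intro R
    by_cases hR : R ∈ V.erase N
    · obtain ⟨hRN, hRV⟩ := mem_erase.mp hR
      obtain ⟨t, ht, -⟩ := h.existsUnique_tangent R hRV hRN
      obtain ⟨d, hdt, hd⟩ := exists_common_point t ℓ
      exact ⟨d, fun _ => ⟨hd, fun hdD => ht.2.1 d hdD hdt, t, ht,
        (h.nucleus_mem_tangent_iff hRV hRN ht).mpr h0, hdt⟩⟩
    · exact ⟨R, fun h => absurd h hR⟩
  choose d hd using hex
  have : Fintype (PGPoint F) := Fintype.ofFinite _
  have hle : #(V.erase N) ≤ #(({P : PGPoint F | pgMem P ℓ} : Finset _) \ D) := by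
    refine card_le_card_of_injOn d (fun R hR => ?_) (fun R hR R' hR' e => ?_)
    · have := hd R hR
      simp [this.1, this.2.1]
    · obtain ⟨hdℓ, -, t, ht, hNt, hdt⟩ := hd R hR
      obtain ⟨-, -, t', ht', hNt', hdt'⟩ := hd R' hR'
      rw [← e] at hdt'
      have htt : t = t' := line_unique (h.ne_of_mem h.nucleus_mem hdℓ) hNt hdt hNt' hdt'
      have hR1 := mem_erase.mp (mem_coe.mp hR)
      exact ht'.2.2 R hR1.2 hR1.1 (htt ▸ ht.1)
  have hsub : D ⊆ ({P : PGPoint F | pgMem P ℓ} : Finset _) := fun P hP => by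
    simpa using h.mem_line P hP
  rw [card_sdiff_of_subset hsub, card_points_on, card_erase_of_mem h.nucleus_mem, h.card_eq] at hle
  have := Fintype.one_lt_card (α := F)
  omega

lemma nucleus_notMem_tangent (h : NucleusConfig ℓ V D N) (hD : 2 < #D) {R : PGPoint F}
    (hR : R ∈ V) (hRN : R ≠ N)
    {t : PGLine F} (ht : IsTangentAt V D N R t) : ¬ pgMem N t :=
  fun hN => h.card_cast_ne_zero hD ((h.nucleus_mem_tangent_iff hR hRN ht).mp hN)

lemma eq_of_mem_tangent (h : NucleusConfig ℓ V D N) (hD : 2 < #D) {R : PGPoint F} (hR : R ∈ V)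
    (hRN : R ≠ N)
    {t : PGLine F} (ht : IsTangentAt V D N R t) {Q : PGPoint F} (hQ : Q ∈ V) (hQt : pgMem Q t) :
    Q = R := by
  refine ht.2.2 Q hQ ?_ hQt
  rintro rfl
  exact h.nucleus_notMem_tangent hD hR hRN ht hQt

lemma three_le_lineCount_of_nucleus_mem (h : NucleusConfig ℓ V D N) (hD : 2 < #D)
    {R : PGPoint F} (hR : R ∈ V) (hRN : R ≠ N)
    {L : PGLine F} (hRL : pgMem R L) (hNL : pgMem N L) : 3 ≤ lineCount V L := by
  obtain ⟨Q, hQ, hQN, hQL, hQR⟩ : ∃ Q ∈ V, Q ≠ N ∧ pgMem Q L ∧ Q ≠ R := by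
    by_contra! hcon
    refine h.nucleus_notMem_tangent hD hR hRN (t := L) ⟨hRL, fun P hP hPL => ?_, hcon⟩ hNL
    exact h.notMem_of_two_points hR h.nucleus_mem hRN hRL hNL hPL hP
  rw [← card_eq_three.mpr ⟨Q, N, R, hQN, hQR, hRN.symm, rfl⟩]
  refine card_le_card fun P hP => ?_
  simp only [mem_insert, mem_singleton] at hP
  rcases hP with rfl | rfl | rfl
  · exact mem_filter.mpr ⟨hQ, hQL⟩
  · exact mem_filter.mpr ⟨h.nucleus_mem, hNL⟩
  · exact mem_filter.mpr ⟨hR, hRL⟩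

lemma two_le_lineCount (h : NucleusConfig ℓ V D N) {R : PGPoint F} (hR : R ∈ V) (hRN : R ≠ N)
    {t : PGLine F}
    (ht : IsTangentAt V D N R t) {e : PGPoint F} (he : pgMem e ℓ) (heD : e ∉ D)
    {L : PGLine F} (hRL : pgMem R L) (heL : pgMem e L) (hLt : L ≠ t) : 2 ≤ lineCount V L := by
  rw [lineCount, ← Nat.lt_iff_add_one_le, one_lt_card]
  by_contra! hcon
  have htan : IsTangentAt V D N R L := by
    refine ⟨hRL, fun P hP hPL => heD ?_, fun Q hQ _ hQL => ?_⟩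
    · rwa [common_point_unique (h.line_ne hR hRL) heL he hPL (h.mem_line P hP)]
    · exact hcon Q (mem_filter.mpr ⟨hQ, hQL⟩) R (mem_filter.mpr ⟨hR, hRL⟩)
  exact hLt ((h.existsUnique_tangent R hR hRN).unique htan ht)

/-- All values of the slope polynomial in a chart whose vertical line through `R` contains at
least three points. -/
lemma exists_tangent_slope (h : NucleusConfig ℓ V D N) (hD : 2 < #D) {M : PGPoint F}
    (χ : AffineChart ℓ M) (hM : pgMem M ℓ)
    (hMD : M ∉ D) {R : PGPoint F} (hR : R ∈ V) (hRN : R ≠ N) {m : PGLine F} (hRm : pgMem R m)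
    (hMm : pgMem M m) (hm : 3 ≤ lineCount V m) {t : PGLine F} (ht : IsTangentAt V D N R t) :
    ∃ s, pgMem (χ.dir s) t ∧ (#D : F) * s = ∑ u with χ.dir u ∈ D, u ∧
      ∀ u, (slopePoly V χ.x χ.y R).eval u =
        if χ.dir u ∈ D then -1 else if u = s then (#D : F) else 0 := by
  obtain ⟨d, hdt, hd⟩ := exists_common_point t ℓ
  have hdM : d ≠ M := by
    rintro rfl
    have htm : t = m := line_unique (h.ne_of_mem hR hd) ht.1 hdt hRm hMm
    have : lineCount V m ≤ 1 := by
      refine card_le_one_iff_subset_singleton.mpr ⟨R, fun Q hQ => ?_⟩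
      rw [mem_filter, ← htm] at hQ
      exact mem_singleton.mpr (h.eq_of_mem_tangent hD hR hRN ht hQ.1 hQ.2)
    omega
  obtain ⟨s, rfl⟩ := χ.exists_dir_eq d hd hdM
  have hneg : ∀ u, χ.dir u ∈ D → (slopePoly V χ.x χ.y R).eval u = -1 := fun u hu =>
    h.eval_slopePoly_of_dir_mem χ hR hu
  have hzero : ∀ u, χ.dir u ∉ D → u ≠ s → (slopePoly V χ.x χ.y R).eval u = 0 := by
    intro u hu hus
    by_contra h0
    obtain ⟨K, hRK, huK⟩ := exists_line_through (h.ne_of_mem hR (χ.dir_mem u))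
    have hK := h.isTangentAt_of_eval_ne_zero χ hR hRK huK hu h0
    rw [(h.existsUnique_tangent R hR hRN).unique hK ht] at huK
    exact hus (χ.dir_injective (common_point_unique (h.line_ne hR ht.1)
      huK (χ.dir_mem u) hdt (χ.dir_mem s)))
  have hval := slopePoly_eval_tangent (x := χ.x) (y := χ.y) (D := {u | χ.dir u ∈ D}) (d := s)
    h.card_eq (by rwa [h.lineCount_vertical χ hM hR hRm hMm])
    (by simpa using fun hs => ht.2.1 _ hs hdt) (by simpa using hneg) (by simpa using hzero)
  rw [card_filter_dir h.mem_line χ hMD] at hval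
  refine ⟨s, hdt, hval.2, fun u => ?_⟩
  split_ifs with h1 h2
  · exact hneg u h1
  · rw [h2, hval.1]
  · exact hzero u h1 h2

lemma exists_chart_of_secant (h : NucleusConfig ℓ V D N) {m : PGLine F} (hm : 3 ≤ lineCount V m) :
    ∃ M, pgMem M ℓ ∧ pgMem M m ∧ M ∉ D ∧ Nonempty (AffineChart ℓ M) := by
  obtain ⟨M, hMm, hM⟩ := exists_common_point m ℓ
  obtain ⟨P, hP, Q, hQ, hPQ⟩ := one_lt_card.mp (show 1 < #{Q ∈ V | pgMem Q m} from by
    rw [lineCount] at hm; omega)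
  rw [mem_filter] at hP hQ
  exact ⟨M, hM, hMm, h.notMem_of_two_points hP.1 hQ.1 hPQ hP.2 hQ.2 hMm, nonempty_affineChart hM⟩

/-- The tangents at two points of a line with at least three points meet on `ℓ`. -/
lemma mem_tangent_of_mem_tangent (h : NucleusConfig ℓ V D N) (hD : 2 < #D) {m : PGLine F}
    (hm : 3 ≤ lineCount V m)
    {R R' : PGPoint F} (hR : R ∈ V) (hRN : R ≠ N) (hRm : pgMem R m) (hR' : R' ∈ V) (hRN' : R' ≠ N)
    (hRm' : pgMem R' m) {t t' : PGLine F} (ht : IsTangentAt V D N R t)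
    (ht' : IsTangentAt V D N R' t') {d : PGPoint F} (hd : pgMem d ℓ) (hdt : pgMem d t) :
    pgMem d t' := by
  obtain ⟨M, hM, hMm, hMD, ⟨χ⟩⟩ := h.exists_chart_of_secant hm
  obtain ⟨s, hst, hs, -⟩ := h.exists_tangent_slope hD χ hM hMD hR hRN hRm hMm hm ht
  obtain ⟨s', hst', hs', -⟩ := h.exists_tangent_slope hD χ hM hMD hR' hRN' hRm' hMm hm ht'
  have hss : s = s' := mul_left_cancel₀ (h.card_cast_ne_zero hD) (hs.trans hs'.symm)
  rw [common_point_unique (h.line_ne hR ht.1) hdt hd hst (χ.dir_mem s), hss]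
  exact hst'

/-- Parallel lines through two points of a line with at least three points contain the same number
of points. -/
lemma lineCount_eq_of_parallel (h : NucleusConfig ℓ V D N) (hD : 2 < #D) {m : PGLine F}
    (hm : 3 ≤ lineCount V m)
    {R R' : PGPoint F} (hR : R ∈ V) (hRN : R ≠ N) (hRm : pgMem R m) (hR' : R' ∈ V) (hRN' : R' ≠ N)
    (hRm' : pgMem R' m) {e : PGPoint F} (he : pgMem e ℓ) {L L' : PGLine F} (hRL : pgMem R L)
    (heL : pgMem e L) (hRL' : pgMem R' L') (heL' : pgMem e L') :
    lineCount V L = lineCount V L' := by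
  obtain ⟨M, hM, hMm, hMD, ⟨χ⟩⟩ := h.exists_chart_of_secant hm
  by_cases heM : e = M
  · subst heM
    rw [line_unique (h.ne_of_mem hR hM) hRL heL hRm hMm,
      line_unique (h.ne_of_mem hR' hM) hRL' heL' hRm' hMm]
  obtain ⟨u, rfl⟩ := χ.exists_dir_eq e he heM
  obtain ⟨t, ht, -⟩ := h.existsUnique_tangent R hR hRN
  obtain ⟨t', ht', -⟩ := h.existsUnique_tangent R' hR' hRN'
  obtain ⟨s, -, hs, hev⟩ := h.exists_tangent_slope hD χ hM hMD hR hRN hRm hMm hm ht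
  obtain ⟨s', -, hs', hev'⟩ := h.exists_tangent_slope hD χ hM hMD hR' hRN' hRm' hMm hm ht'
  have hss : s = s' := mul_left_cancel₀ (h.card_cast_ne_zero hD) (hs.trans hs'.symm)
  have hdeg : ∀ Q ∈ V, (slopePoly V χ.x χ.y Q).degree < #(univ : Finset F) := by
    intro Q hQ
    have hle := natDegree_slopePoly_add_card_le (V := V) (x := χ.x) (y := χ.y) (R := Q)
    have hpos : 0 < #{P ∈ V | χ.x P = χ.x Q} := card_pos.mpr ⟨Q, by simp [hQ]⟩
    rw [h.card_eq] at hle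
    refine degree_le_natDegree.trans_lt ?_
    rw [card_univ]
    exact_mod_cast (by omega : (slopePoly V χ.x χ.y Q).natDegree < Fintype.card F)
  have hpoly : slopePoly V χ.x χ.y R = slopePoly V χ.x χ.y R' :=
    eq_of_degrees_lt_of_eval_finset_eq univ (hdeg R hR) (hdeg R' hR') fun v _ => by
      rw [hev, hev', hss]
  have h0 : slopePoly V χ.x χ.y R ≠ 0 := by
    obtain ⟨P, hP⟩ := card_pos.mp (show 0 < #D by omega)
    obtain ⟨v, rfl⟩ := χ.exists_dir_eq P (h.mem_line P hP) (fun e => hMD (e ▸ hP))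
    intro h0
    have := h.eval_slopePoly_of_dir_mem χ hR hP
    rw [h0, eval_zero] at this
    exact one_ne_zero (neg_eq_zero.mp this.symm)
  have hcount : ∀ Q ∈ V, slopePoly V χ.x χ.y Q ≠ 0 → ∀ K : PGLine F, pgMem Q K →
      pgMem (χ.dir u) K → lineCount V K = (slopePoly V χ.x χ.y Q).rootMultiplicity u + 1 := by
    intro Q hQ hQ0 K hQK huK
    rw [rootMultiplicity_slopePoly_add_one hQ hQ0, lineCount]
    congr 1
    exact filter_congr fun P hP =>
      χ.mem_line_iff (h.notMem_line P hP) (h.notMem_line Q hQ) hQK huK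
  rw [hcount R hR h0 L hRL heL, hcount R' hR' (hpoly ▸ h0) L' hRL' heL', hpoly]

lemma sum_lineCount (h : NucleusConfig ℓ V D N) [Fintype (PGPoint F)] {R : PGPoint F} (hR : R ∈ V)
    {J : PGPoint F → PGLine F} (hJ : ∀ e, pgMem e ℓ → pgMem R (J e) ∧ pgMem e (J e)) :
    ∑ e with pgMem e ℓ, lineCount V (J e) = 2 * Fintype.card F := by
  have hcount : ∀ Q ∈ V.erase R, #{e : PGPoint F | pgMem e ℓ ∧ pgMem Q (J e)} = 1 := by
    intro Q hQ
    obtain ⟨hQR, hQV⟩ := mem_erase.mp hQ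
    obtain ⟨L, hQL, hRL⟩ := exists_line_through hQR
    obtain ⟨e, heL, he⟩ := exists_common_point L ℓ
    refine card_eq_one.mpr ⟨e, ?_⟩
    ext e'
    simp only [mem_filter, mem_univ, true_and, mem_singleton]
    constructor
    · rintro ⟨he', hQe'⟩
      have := line_unique hQR hQe' (hJ e' he').1 hQL hRL
      exact common_point_unique (h.line_ne hR hRL) (this ▸ (hJ e' he').2) he' heL he
    · rintro rfl
      refine ⟨he, ?_⟩
      rwa [line_unique (h.ne_of_mem hR he) (hJ _ he).1 (hJ _ he).2 hRL heL]
  have hcountR : #{e : PGPoint F | pgMem e ℓ ∧ pgMem R (J e)} = Fintype.card F + 1 := by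
    rw [← card_points_on ℓ]
    congr 1
    exact filter_congr fun e _ => ⟨fun h => h.1, fun he => ⟨he, (hJ e he).1⟩⟩
  have hswap := sum_card_bipartiteAbove_eq_sum_card_bipartiteBelow
    (s := ({e : PGPoint F | pgMem e ℓ} : Finset _)) (t := V) (fun e Q => pgMem Q (J e))
  simp only [bipartiteAbove, bipartiteBelow, filter_filter] at hswap
  simp only [lineCount]
  rw [hswap, ← add_sum_erase V _ hR, hcountR, sum_congr rfl hcount, sum_const,
    card_erase_of_mem hR, h.card_eq, smul_eq_mul]
  have := Fintype.one_lt_card (α := F)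
  omega

/-- The points of `ℓ` outside `D` and off the line `t`. -/
noncomputable def secantDirections [Fintype (PGPoint F)] (ℓ : PGLine F) (D : Finset (PGPoint F))
    (t : PGLine F) : Finset (PGPoint F) :=
  {e | pgMem e ℓ ∧ e ∉ D ∧ ¬ pgMem e t}

lemma sum_lineCount_secantDirections (h : NucleusConfig ℓ V D N) [Fintype (PGPoint F)]
    (hD : 2 < #D) {R : PGPoint F} (hR : R ∈ V) (hRN : R ≠ N) {t : PGLine F}
    (ht : IsTangentAt V D N R t) {J : PGPoint F → PGLine F}
    (hJ : ∀ e, pgMem e ℓ → pgMem R (J e) ∧ pgMem e (J e)) :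
    ∑ e ∈ secantDirections ℓ D t, lineCount V (J e) + 1 = 2 * #(secantDirections ℓ D t) + #D := by
  obtain ⟨d, hdt, hd⟩ := exists_common_point t ℓ
  have hdD : d ∉ D := fun hdD => ht.2.1 d hdD hdt
  have hdE : d ∉ secantDirections ℓ D t := by simp [secantDirections, hdt]
  have hdisj : Disjoint D (insert d (secantDirections ℓ D t)) := by
    rw [disjoint_insert_right]
    refine ⟨hdD, disjoint_left.mpr fun e he he' => ?_⟩
    exact (mem_filter.mp he').2.2.1 he
  have hsplit : ({e | pgMem e ℓ} : Finset _) = D ∪ insert d (secantDirections ℓ D t) := by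
    ext e
    simp only [secantDirections, mem_filter, mem_univ, true_and, mem_union, mem_insert]
    constructor
    · intro he
      by_cases heD : e ∈ D
      · exact Or.inl heD
      · by_cases het : pgMem e t
        · exact Or.inr (Or.inl (common_point_unique (h.line_ne hR ht.1) het he hdt hd))
        · exact Or.inr (Or.inr ⟨he, heD, het⟩)
    · rintro (he | rfl | he)
      · exact h.mem_line e he
      · exact hd
      · exact he.1
  have hone : ∀ L : PGLine F, pgMem R L → (∀ Q ∈ V, pgMem Q L → Q = R) → lineCount V L = 1 := by
    intro L hRL hL
    refine card_eq_one.mpr ⟨R, ?_⟩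
    ext Q
    simp only [mem_filter, mem_singleton]
    exact ⟨fun hQ => hL Q hQ.1 hQ.2, fun hQ => hQ ▸ ⟨hR, hRL⟩⟩
  have hcard := card_points_on ℓ
  have hsum := h.sum_lineCount hR hJ
  rw [hsplit, card_union_of_disjoint hdisj, card_insert_of_notMem hdE] at hcard
  rw [hsplit, sum_union hdisj, sum_insert hdE] at hsum
  have hDsum : ∑ e ∈ D, lineCount V (J e) = #D := by
    rw [card_eq_sum_ones]
    refine sum_congr rfl fun e he => ?_
    have hJe := hJ e (h.mem_line e he)
    exact hone _ hJe.1 fun Q hQ hQe => h.eq_of_mem e he Q hQ R hR _ hJe.2 hQe hJe.1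
  have hdsum : lineCount V (J d) = 1 := by
    rw [line_unique (h.ne_of_mem hR hd) (hJ d hd).1 (hJ d hd).2 ht.1 hdt]
    exact hone t ht.1 fun Q hQ hQt => h.eq_of_mem_tangent hD hR hRN ht hQ hQt
  omega

lemma sum_lineCount_add_one_le (h : NucleusConfig ℓ V D N) [Fintype (PGPoint F)]
    (hD : 2 < #D) {R : PGPoint F} (hR : R ∈ V) (hRN : R ≠ N) {t : PGLine F}
    (ht : IsTangentAt V D N R t) {J : PGPoint F → PGLine F}
    (hJ : ∀ e, pgMem e ℓ → pgMem R (J e) ∧ pgMem e (J e)) {T : Finset (PGPoint F)}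
    (hT : T ⊆ secantDirections ℓ D t) :
    ∑ e ∈ T, lineCount V (J e) + 1 ≤ 2 * #T + #D := by
  have hall := h.sum_lineCount_secantDirections hD hR hRN ht hJ
  rw [← sum_sdiff hT] at hall
  have hrest : 2 * #(secantDirections ℓ D t \ T) ≤
      ∑ e ∈ secantDirections ℓ D t \ T, lineCount V (J e) := by
    rw [mul_comm, ← smul_eq_mul]
    refine card_nsmul_le_sum _ _ _ fun e he => ?_
    obtain ⟨-, he1, he2, he3⟩ := mem_filter.mp (mem_sdiff.mp he).1
    have hJe := hJ e he1
    exact h.two_le_lineCount hR hRN ht he1 he2 hJe.1 hJe.2 fun e0 => he3 (e0 ▸ hJe.2)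
  rw [card_sdiff_of_subset hT] at hrest
  have := card_le_card hT
  omega

lemma exists_join (h : NucleusConfig ℓ V D N) {R : PGPoint F} (hR : R ∈ V) :
    ∃ J : PGPoint F → PGLine F, ∀ e, pgMem e ℓ → pgMem R (J e) ∧ pgMem e (J e) := by
  have hex : ∀ e, ∃ L : PGLine F, pgMem e ℓ → pgMem R L ∧ pgMem e L := by
    intro e
    by_cases he : pgMem e ℓ
    · obtain ⟨L, hL⟩ := exists_line_through (h.ne_of_mem hR he)
      exact ⟨L, fun _ => hL⟩
    · exact ⟨ℓ, fun h => absurd h he⟩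
  choose J hJ using hex
  exact ⟨J, hJ⟩

lemma mem_secantDirections (h : NucleusConfig ℓ V D N) [Fintype (PGPoint F)] (hD : 2 < #D)
    {R : PGPoint F} (hR : R ∈ V) (hRN : R ≠ N) {t : PGLine F} (ht : IsTangentAt V D N R t)
    {e : PGPoint F} (he : pgMem e ℓ) {L : PGLine F} (hRL : pgMem R L) (heL : pgMem e L)
    (hL : 2 ≤ lineCount V L) : e ∈ secantDirections ℓ D t := by
  obtain ⟨Q, hQ, hQR⟩ := exists_mem_ne (show 1 < #{Q ∈ V | pgMem Q L} from hL) R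
  rw [mem_filter] at hQ
  refine mem_filter.mpr ⟨mem_univ e, he, h.notMem_of_two_points hQ.1 hR hQR hQ.2 hRL heL, ?_⟩
  intro het
  rw [line_unique (h.ne_of_mem hR he) hRL heL ht.1 het] at hQ
  exact hQR (h.eq_of_mem_tangent hD hR hRN ht hQ.1 hQ.2)

/-- A line with at least three points which misses the nucleus has at most `(|D| + 1) / 2`
points. -/
lemma two_mul_lineCount_le (h : NucleusConfig ℓ V D N) (hD : 2 < #D) {m : PGLine F}
    (hm : 3 ≤ lineCount V m) (hNm : ¬ pgMem N m) : 2 * lineCount V m ≤ #D + 1 := by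
  have : Fintype (PGPoint F) := Fintype.ofFinite _
  have hne : ∀ {Q}, pgMem Q m → Q ≠ N := fun hQm e => hNm (e ▸ hQm)
  obtain ⟨R, hR⟩ := card_pos.mp (show 0 < #{Q ∈ V | pgMem Q m} from by rw [lineCount] at hm; omega)
  obtain ⟨hRV, hRm⟩ := mem_filter.mp hR
  obtain ⟨t, ht, -⟩ := h.existsUnique_tangent R hRV (hne hRm)
  obtain ⟨M, hMm, hM⟩ := exists_common_point m ℓ
  obtain ⟨J, hJ⟩ := h.exists_join hRV
  have hJM : J M = m := line_unique (h.ne_of_mem hRV hM) (hJ M hM).1 (hJ M hM).2 hRm hMm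
  have hex : ∀ Q, ∃ e, Q ∈ V → pgMem Q m → pgMem e ℓ ∧
      ∃ L : PGLine F, pgMem Q L ∧ pgMem N L ∧ pgMem e L := by
    intro Q
    by_cases hQm : pgMem Q m
    · obtain ⟨L, hQL, hNL⟩ := exists_line_through (hne hQm)
      obtain ⟨e, heL, he⟩ := exists_common_point L ℓ
      exact ⟨e, fun _ _ => ⟨he, L, hQL, hNL, heL⟩⟩
    · exact ⟨Q, fun _ h => absurd h hQm⟩
  choose e he using hex
  have hinj : Set.InjOn e ({Q ∈ V | pgMem Q m} : Finset _) := by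
    intro Q hQ Q' hQ' hee
    rw [mem_coe, mem_filter] at hQ hQ'
    obtain ⟨heℓ, L, hQL, hNL, heL⟩ := he Q hQ.1 hQ.2
    obtain ⟨-, L', hQL', hNL', heL'⟩ := he Q' hQ'.1 hQ'.2
    have hLL : L = L' :=
      line_unique (h.ne_of_mem h.nucleus_mem heℓ) hNL heL hNL' (hee ▸ heL')
    by_contra hQQ
    exact hNm (line_unique hQQ hQ.2 hQ'.2 hQL (hLL ▸ hQL') ▸ hNL)
  have hMe : M ∉ ({Q ∈ V | pgMem Q m} : Finset _).image e := by
    intro hMe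
    obtain ⟨Q, hQ, rfl⟩ := mem_image.mp hMe
    rw [mem_filter] at hQ
    obtain ⟨-, L, hQL, hNL, heL⟩ := he Q hQ.1 hQ.2
    exact hNm (line_unique (h.ne_of_mem hQ.1 hM) hQL heL hQ.2 hMm ▸ hNL)
  have hthree : ∀ f ∈ ({Q ∈ V | pgMem Q m} : Finset _).image e,
      pgMem f ℓ ∧ 3 ≤ lineCount V (J f) := by
    intro f hf
    obtain ⟨Q, hQ, rfl⟩ := mem_image.mp hf
    rw [mem_filter] at hQ
    obtain ⟨heℓ, L, hQL, hNL, heL⟩ := he Q hQ.1 hQ.2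
    refine ⟨heℓ, ?_⟩
    rw [h.lineCount_eq_of_parallel hD hm hRV (hne hRm) hRm hQ.1 (hne hQ.2) hQ.2 heℓ
      (hJ _ heℓ).1 (hJ _ heℓ).2 hQL heL]
    exact h.three_le_lineCount_of_nucleus_mem hD hQ.1 (hne hQ.2) hQL hNL
  have hT : insert M (({Q ∈ V | pgMem Q m} : Finset _).image e) ⊆ secantDirections ℓ D t := by
    intro f hf
    rcases mem_insert.mp hf with rfl | hf
    · exact h.mem_secantDirections hD hRV (hne hRm) ht hM hRm hMm (by omega)
    · obtain ⟨hfℓ, hf3⟩ := hthree f hf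
      exact h.mem_secantDirections hD hRV (hne hRm) ht hfℓ (hJ f hfℓ).1 (hJ f hfℓ).2 (by omega)
  have hle := h.sum_lineCount_add_one_le hD hRV (hne hRm) ht hJ hT
  rw [sum_insert hMe, hJM, card_insert_of_notMem hMe] at hle
  have hsum := card_nsmul_le_sum _ (fun f => lineCount V (J f)) 3 fun f hf => (hthree f hf).2
  rw [card_image_of_injOn hinj, ← lineCount, smul_eq_mul] at hsum
  rw [card_image_of_injOn hinj, ← lineCount] at hle
  omega

/-- A line through the nucleus with at least three points has `|D| + 1` points, or at most
`(|D| + 1) / 2` points. -/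
lemma lineCount_eq_or_two_mul_le (h : NucleusConfig ℓ V D N) (hD : 2 < #D) {m : PGLine F}
    (hm : 3 ≤ lineCount V m) (hNm : pgMem N m) :
    lineCount V m = #D + 1 ∨ 2 * lineCount V m ≤ #D + 1 := by
  have : Fintype (PGPoint F) := Fintype.ofFinite _
  obtain ⟨R, hR, hRN⟩ := exists_mem_ne (show 1 < #{Q ∈ V | pgMem Q m} from by
    rw [lineCount] at hm; omega) N
  obtain ⟨hRV, hRm⟩ := mem_filter.mp hR
  obtain ⟨t, ht, -⟩ := h.existsUnique_tangent R hRV hRN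
  obtain ⟨M, hMm, hM⟩ := exists_common_point m ℓ
  obtain ⟨J, hJ⟩ := h.exists_join hRV
  have hJM : J M = m := line_unique (h.ne_of_mem hRV hM) (hJ M hM).1 (hJ M hM).2 hRm hMm
  have hME : M ∈ secantDirections ℓ D t :=
    h.mem_secantDirections hD hRV hRN ht hM hRm hMm (by omega)
  by_cases hex : ∃ e ∈ secantDirections ℓ D t, e ≠ M ∧ 3 ≤ lineCount V (J e)
  · obtain ⟨e, heE, heM, he3⟩ := hex
    have heℓ := (mem_filter.mp heE).2.1
    obtain ⟨hRe, hee⟩ := hJ e heℓ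
    have hJm : J e ≠ m := fun hJm =>
      heM (common_point_unique (h.line_ne hRV hRm) (hJm ▸ hee) heℓ hMm hM)
    obtain ⟨R', hR', hRR'⟩ := exists_mem_ne (show 1 < #{Q ∈ V | pgMem Q (J e)} from by
      rw [lineCount] at he3; omega) R
    obtain ⟨hRV', hRe'⟩ := mem_filter.mp hR'
    have hRm' : ¬ pgMem R' m := fun hRm' => hJm (line_unique hRR' hRe' hRe hRm' hRm)
    have hRN' : R' ≠ N := fun e => hRm' (e ▸ hNm)
    obtain ⟨m', hRm'', hMm'⟩ := exists_line_through (h.ne_of_mem hRV' hM)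
    have heq := h.lineCount_eq_of_parallel hD he3 hRV hRN hRe hRV' hRN' hRe' hM hRm hMm hRm'' hMm'
    have hNm' : ¬ pgMem N m' := fun hN =>
      hRm' (line_unique (h.ne_of_mem h.nucleus_mem hM) hN hMm' hNm hMm ▸ hRm'')
    right
    rw [heq]
    exact h.two_mul_lineCount_le hD (heq ▸ hm) hNm'
  · push Not at hex
    left
    have hall := h.sum_lineCount_secantDirections hD hRV hRN ht hJ
    have hrest : ∑ e ∈ (secantDirections ℓ D t).erase M, lineCount V (J e) ≤
        #((secantDirections ℓ D t).erase M) • 2 :=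
      sum_le_card_nsmul _ _ _ fun e he => by
        have := hex e (mem_of_mem_erase he) (ne_of_mem_erase he)
        omega
    have hle := h.sum_lineCount_add_one_le hD hRV hRN ht hJ (singleton_subset_iff.mpr hME)
    rw [sum_singleton, hJM, card_singleton] at hle
    rw [← add_sum_erase _ _ hME, hJM] at hall
    rw [smul_eq_mul, card_erase_of_mem hME] at hrest
    have := card_pos.mpr ⟨M, hME⟩
    omega

end NucleusConfig

end Configuration

section Semioval

open scoped Classical

variable {F : Type*} [Field F] {S : Set (PGPoint F)} {ℓ : PGLine F} {N : PGPoint F}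

lemma nsec_eq_one_iff {R : PGPoint F} {t : PGLine F} (hR : R ∈ S) (hRt : pgMem R t) :
    nsec S t = 1 ↔ ∀ Q ∈ S, pgMem Q t → Q = R := by
  rw [nsec, Set.ncard_eq_one]
  constructor
  · rintro ⟨P, hP⟩ Q hQ hQt
    have hRP : R ∈ ({P} : Set _) := hP ▸ ⟨hR, hRt⟩
    have hQP : Q ∈ ({P} : Set _) := hP ▸ ⟨hQ, hQt⟩
    exact hQP.trans hRP.symm
  · intro h
    exact ⟨R, Set.Subset.antisymm (fun Q hQ => h Q hQ.1 hQ.2)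
      (Set.singleton_subset_iff.mpr ⟨hR, hRt⟩)⟩

lemma nsec_eq_card [Fintype (PGPoint F)] (S : Set (PGPoint F)) (L : PGLine F) :
    nsec S L = #{Q | Q ∈ S ∧ pgMem Q L} := by
  rw [nsec, Set.ncard_eq_toFinset_card']
  congr 1
  ext
  simp

/-- The points of `S` outside `ℓ`, together with `N`. -/
noncomputable def affinePart [Fintype (PGPoint F)] (S : Set (PGPoint F)) (ℓ : PGLine F)
    (N : PGPoint F) : Finset (PGPoint F) :=
  insert N ({Q | Q ∈ S ∧ ¬ pgMem Q ℓ} : Finset (PGPoint F))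

/-- The points of `S` on `ℓ`. -/
noncomputable def infinitePart [Fintype (PGPoint F)] (S : Set (PGPoint F)) (ℓ : PGLine F) :
    Finset (PGPoint F) :=
  {Q | Q ∈ S ∧ pgMem Q ℓ}

lemma mem_affinePart [Fintype (PGPoint F)] {Q : PGPoint F} :
    Q ∈ affinePart S ℓ N ↔ Q = N ∨ Q ∈ S ∧ ¬ pgMem Q ℓ := by
  simp [affinePart]

lemma mem_infinitePart [Fintype (PGPoint F)] {Q : PGPoint F} :
    Q ∈ infinitePart S ℓ ↔ Q ∈ S ∧ pgMem Q ℓ := by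
  simp [infinitePart]

lemma isTangentAt_iff [Fintype (PGPoint F)] (hNS : N ∉ S) {R : PGPoint F} (hR : R ∈ S)
    (hRℓ : ¬ pgMem R ℓ) {t : PGLine F} :
    IsTangentAt (affinePart S ℓ N) (infinitePart S ℓ) N R t ↔
      pgMem R t ∧ nsec S t = 1 := by
  rw [IsTangentAt]
  refine and_congr_right fun hRt => ?_
  rw [nsec_eq_one_iff hR hRt]
  constructor
  · rintro ⟨h1, h2⟩ Q hQ hQt
    by_cases hQℓ : pgMem Q ℓ
    · exact absurd hQt (h1 Q (mem_infinitePart.mpr ⟨hQ, hQℓ⟩))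
    · exact h2 Q (mem_affinePart.mpr (Or.inr ⟨hQ, hQℓ⟩)) (fun e => hNS (e ▸ hQ)) hQt
  · intro h
    refine ⟨fun P hP hPt => ?_, fun Q hQ hQN hQt => ?_⟩
    · obtain ⟨hPS, hPℓ⟩ := mem_infinitePart.mp hP
      exact hRℓ (h P hPS hPt ▸ hPℓ)
    · exact h Q ((mem_affinePart.mp hQ).resolve_left hQN).1 hQt

lemma nsec_eq_lineCount [Fintype (PGPoint F)] (hNS : N ∉ S) {m : PGLine F}
    (hm : ∀ P ∈ infinitePart S ℓ, ¬ pgMem P m) :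
    nsec S m + (if pgMem N m then 1 else 0) = lineCount (affinePart S ℓ N) m := by
  have e : ({Q | Q ∈ S ∧ ¬ pgMem Q ℓ} : Finset _).filter (fun Q => pgMem Q m) =
      ({Q | Q ∈ S ∧ pgMem Q m} : Finset _) := by
    ext Q
    simp only [mem_filter, mem_univ, true_and]
    exact ⟨fun h => ⟨h.1.1, h.2⟩,
      fun h => ⟨⟨h.1, fun hQ => hm Q (mem_infinitePart.mpr ⟨h.1, hQ⟩) h.2⟩, h.2⟩⟩
  rw [nsec_eq_card, lineCount, affinePart, filter_insert]
  split_ifs with h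
  · rw [card_insert_of_notMem (by simp [hNS]), e]
  · rw [e, add_zero]

variable [Fintype F]

lemma nucleus_notMem_secant (hS : isSemioval S) (hℓ : 2 < nsec S ℓ)
    (hN : ∀ P ∈ S, pgMem P ℓ → ∀ t : PGLine F, pgMem P t → nsec S t = 1 → pgMem N t) :
    ¬ pgMem N ℓ := by
  intro hNℓ
  have hall : ∀ P ∈ S, pgMem P ℓ → P = N := by
    intro P hP hPℓ
    obtain ⟨t, ⟨hPt, ht⟩, -⟩ := hS P hP
    have hne : t ≠ ℓ := by
      rintro rfl
      omega
    exact common_point_unique hne hPt hPℓ (hN P hP hPℓ t hPt ht) hNℓ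
  obtain ⟨P, hP, Q, hQ, hne⟩ := (Set.one_lt_ncard (Set.toFinite _)).mp
    (show 1 < {P ∈ S | pgMem P ℓ}.ncard from by rw [nsec] at hℓ; omega)
  exact hne ((hall P hP.1 hP.2).trans (hall Q hQ.1 hQ.2).symm)

lemma nucleus_notMem (hS : isSemioval S) (hℓ : 2 < nsec S ℓ)
    (hN : ∀ P ∈ S, pgMem P ℓ → ∀ t : PGLine F, pgMem P t → nsec S t = 1 → pgMem N t) :
    N ∉ S := by
  intro hNS
  obtain ⟨P, hP, hPℓ⟩ := Set.nonempty_of_ncard_ne_zero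
    (show {P ∈ S | pgMem P ℓ}.ncard ≠ 0 from by rw [nsec] at hℓ; omega)
  obtain ⟨t, ⟨hPt, ht⟩, -⟩ := hS P hP
  have hNt := hN P hP hPℓ t hPt ht
  have := (nsec_eq_one_iff hP hPt).mp ht N hNS hNt
  exact nucleus_notMem_secant hS hℓ hN (this ▸ hPℓ)

variable [Fintype (PGPoint F)]

lemma card_affinePart (hNS : N ∉ S) (hsize : S.ncard = Fintype.card F - 1 + nsec S ℓ) :
    #(affinePart S ℓ N) = Fintype.card F := by
  have hsplit := card_filter_add_card_filter_not (s := S.toFinset) (fun Q => pgMem Q ℓ)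
  have e1 : S.toFinset.filter (fun Q => pgMem Q ℓ) = ({Q | Q ∈ S ∧ pgMem Q ℓ} : Finset _) := by
    ext; simp
  have e2 : S.toFinset.filter (fun Q => ¬ pgMem Q ℓ) =
      ({Q | Q ∈ S ∧ ¬ pgMem Q ℓ} : Finset _) := by
    ext; simp
  rw [e1, e2, ← nsec_eq_card, ← Set.ncard_eq_toFinset_card', hsize] at hsplit
  rw [affinePart, card_insert_of_notMem (by simp [hNS])]
  have := Fintype.one_lt_card (α := F)
  omega

lemma nucleusConfig_of_semioval (hS : isSemioval S) (hℓ : 2 < nsec S ℓ)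
    (hsize : S.ncard = Fintype.card F - 1 + nsec S ℓ)
    (hN : ∀ P ∈ S, pgMem P ℓ → ∀ t : PGLine F, pgMem P t → nsec S t = 1 → pgMem N t) :
    NucleusConfig ℓ (affinePart S ℓ N) (infinitePart S ℓ) N := by
  have hNℓ := nucleus_notMem_secant hS hℓ hN
  have hNS := nucleus_notMem hS hℓ hN
  have hV := card_affinePart hNS hsize
  have hVℓ : ∀ Q ∈ affinePart S ℓ N, ¬ pgMem Q ℓ := by
    intro Q hQ
    rcases mem_affinePart.mp hQ with rfl | ⟨-, h⟩
    exacts [hNℓ, h]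
  refine ⟨mem_affinePart.mpr (Or.inl rfl), hV, hVℓ, fun P hP => (mem_infinitePart.mp hP).2, ?_, ?_⟩
  · intro P hP Q hQ R hR L hPL hQL hRL
    obtain ⟨hPS, hPℓ⟩ := mem_infinitePart.mp hP
    obtain ⟨M, hM, hMP⟩ := exists_ne_point_on ℓ P
    obtain ⟨χ⟩ := nonempty_affineChart hM
    obtain ⟨t, rfl⟩ := χ.exists_dir_eq P hPℓ hMP.symm
    have himage : (affinePart S ℓ N).image (fun Q => χ.y Q - t * χ.x Q) = univ := by
      refine eq_univ_of_forall fun c => mem_image.mpr ?_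
      obtain ⟨K, hKℓ, htK, hK⟩ := χ.exists_line t c
      by_cases hK1 : nsec S K = 1
      · exact ⟨N, mem_affinePart.mpr (Or.inl rfl), (hK N hNℓ).mp (hN _ hPS hPℓ K htK hK1)⟩
      · rw [nsec_eq_one_iff hPS htK] at hK1
        push Not at hK1
        obtain ⟨Q', hQ', hQK', hne⟩ := hK1
        have hQℓ' : ¬ pgMem Q' ℓ := fun h => hne (common_point_unique hKℓ hQK' h htK hPℓ)
        exact ⟨Q', mem_affinePart.mpr (Or.inr ⟨hQ', hQℓ'⟩), (hK Q' hQℓ').mp hQK'⟩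
    have hinj := card_image_iff.mp (by rw [himage, card_univ, hV])
    exact hinj hQ hR ((χ.mem_line_iff (hVℓ Q hQ) (hVℓ R hR) hRL hPL).mp hQL)
  · intro R hR hRN
    obtain ⟨hRS, hRℓ⟩ := (mem_affinePart.mp hR).resolve_left hRN
    simpa only [isTangentAt_iff hNS hRS hRℓ] using hS R hRS

lemma NucleusConfig.nsec_add_le_two
    (h : NucleusConfig ℓ (affinePart S ℓ N) (infinitePart S ℓ) N) (hNS : N ∉ S)
    {m : PGLine F} (hm : m ≠ ℓ) {P : PGPoint F} (hP : P ∈ infinitePart S ℓ) (hPm : pgMem P m) :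
    nsec S m + (if pgMem N m then 1 else 0) ≤ 2 := by
  have hsub : ({Q | Q ∈ S ∧ pgMem Q m} : Finset _) ⊆
      insert P (((affinePart S ℓ N).filter (fun Q => pgMem Q m)).erase N) := by
    intro Q hQ
    obtain ⟨hQS, hQm⟩ := (mem_filter.mp hQ).2
    rw [mem_insert, mem_erase, mem_filter]
    by_cases hQℓ : pgMem Q ℓ
    · exact Or.inl (common_point_unique hm hQm hQℓ hPm (h.mem_line P hP))
    · exact Or.inr ⟨fun e => hNS (e ▸ hQS), mem_affinePart.mpr (Or.inr ⟨hQS, hQℓ⟩), hQm⟩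
  have hone : #((affinePart S ℓ N).filter (fun Q => pgMem Q m)) ≤ 1 := by
    refine card_le_one.mpr fun Q hQ R hR => ?_
    rw [mem_filter] at hQ hR
    exact h.eq_of_mem P hP Q hQ.1 R hR.1 m hPm hQ.2 hR.2
  have hle := (card_le_card hsub).trans (card_insert_le _ _)
  rw [← nsec_eq_card] at hle
  split_ifs with hNm
  · rw [card_erase_of_mem (mem_filter.mpr ⟨h.nucleus_mem, hNm⟩)] at hle
    omega
  · have := card_le_card (erase_subset N ((affinePart S ℓ N).filter (fun Q => pgMem Q m)))
    omega

lemma NucleusConfig.exists_carrier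
    (h : NucleusConfig ℓ (affinePart S ℓ N) (infinitePart S ℓ) N) (hNS : N ∉ S)
    (hD : 2 < #(infinitePart S ℓ)) {m : PGLine F} (hm : m ≠ ℓ) (hk : 3 ≤ nsec S m) :
    ∃ C : PGPoint F, pgMem C ℓ ∧
      ∀ P ∈ S, pgMem P m → ∀ t : PGLine F, pgMem P t → nsec S t = 1 → pgMem C t := by
  have hmD : ∀ P ∈ infinitePart S ℓ, ¬ pgMem P m := fun P hP hPm => by
    have := h.nsec_add_le_two hNS hm hP hPm
    omega
  have hcount := nsec_eq_lineCount hNS hmD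
  have hmℓ : ∀ P ∈ S, pgMem P m → ¬ pgMem P ℓ := fun P hP hPm hPℓ =>
    hmD P (mem_infinitePart.mpr ⟨hP, hPℓ⟩) hPm
  have hV : ∀ P ∈ S, pgMem P m → P ∈ affinePart S ℓ N := fun P hP hPm =>
    mem_affinePart.mpr (Or.inr ⟨hP, hmℓ P hP hPm⟩)
  have hne : ∀ P ∈ S, P ≠ N := fun P hP e => hNS (e ▸ hP)
  obtain ⟨R, hR, hRm⟩ := Set.nonempty_of_ncard_ne_zero
    (show {P ∈ S | pgMem P m}.ncard ≠ 0 from by rw [nsec] at hk; omega)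
  obtain ⟨t, ht, -⟩ := h.existsUnique_tangent R (hV R hR hRm) (hne R hR)
  obtain ⟨C, hCt, hCℓ⟩ := exists_common_point t ℓ
  refine ⟨C, hCℓ, fun P hP hPm t' hPt' ht' => ?_⟩
  exact h.mem_tangent_of_mem_tangent hD (by omega) (hV R hR hRm) (hne R hR) hRm
    (hV P hP hPm) (hne P hP) hPm ht
    ((isTangentAt_iff hNS hP (hmℓ P hP hPm)).mpr ⟨hPt', ht'⟩) hCℓ hCt

lemma NucleusConfig.nsec_eq_or
    (h : NucleusConfig ℓ (affinePart S ℓ N) (infinitePart S ℓ) N) (hNS : N ∉ S)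
    (hD : 2 < #(infinitePart S ℓ)) {m : PGLine F} (hm : m ≠ ℓ)
    (hk : #(infinitePart S ℓ) ≤ 2 * nsec S m) :
    (nsec S m = #(infinitePart S ℓ) ∧ pgMem N m) ∨
      (2 * nsec S m ≤ #(infinitePart S ℓ) + 1 ∧ ¬ pgMem N m) := by
  by_cases hP : ∃ P ∈ infinitePart S ℓ, pgMem P m
  · obtain ⟨P, hP, hPm⟩ := hP
    have := h.nsec_add_le_two hNS hm hP hPm
    split_ifs at this with hNm
    · omega
    · exact Or.inr ⟨by omega, hNm⟩
  · push Not at hP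
    have hcount := nsec_eq_lineCount hNS hP
    split_ifs at hcount with hNm
    · rcases h.lineCount_eq_or_two_mul_le hD (by omega) hNm with h1 | h1
      · exact Or.inl ⟨by omega, hNm⟩
      · omega
    · refine Or.inr ⟨?_, hNm⟩
      rcases Nat.lt_or_ge (nsec S m) 3 with h3 | h3
      · omega
      · have := h.two_mul_lineCount_le hD (by omega) hNm
        omega

end Semioval

lemma eq_ceil_half {a k : ℕ} (h1 : a ≤ 2 * k) (h2 : 2 * k ≤ a + 1) :
    (k : ℤ) = ⌈(a : ℚ) / 2⌉ := by
  have h1' : (a : ℚ) ≤ 2 * k := by exact_mod_cast h1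
  have h2' : (2 : ℚ) * k ≤ a + 1 := by exact_mod_cast h2
  refine (Int.ceil_eq_iff.mpr ⟨?_, ?_⟩).symm <;> push_cast <;> linarith

/-- Let `S` be a semioval of size `q − 1 + a`, `a > 2`, in `PG(2,q)`, `q = p^h`, with an
`a`-secant `ℓ` with nucleus `N`, and let `m ≠ ℓ` be a `k`-secant of `S`.  Then:
(1) for every `R ∈ S ∖ ℓ` the line `RN` is not a tangent to `S`;
(2) if `k ≥ 3`, then the tangents to `S` at the points of `m ∩ S` are contained in a pencil
    whose carrier lies on `ℓ`;
(3) if `k > (a − 1)/2`, then either `k = a` and `N ∈ m`, or `k = ⌈a/2⌉` and `N ∉ m`. -/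
theorem stmt_7 {F : Type*} [Field F] [Fintype F] (p h q : ℕ) (hp : p.Prime) (hq : q = p ^ h)
    (hcard : Fintype.card F = q)
    (a : ℕ) (ha : 2 < a)
    (S : Set (PGPoint F)) (hS : isSemioval S) (hsize : S.ncard = q - 1 + a)
    (ℓ : PGLine F) (hℓ : nsec S ℓ = a)
    (N : PGPoint F)
    (hN : ∀ P ∈ S, pgMem P ℓ → ∀ t : PGLine F, pgMem P t → nsec S t = 1 → pgMem N t)
    (k : ℕ) (m : PGLine F) (hm : m ≠ ℓ) (hk : nsec S m = k) :
    -- (1)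
    (∀ R ∈ S, ¬ pgMem R ℓ → R ≠ N →
      ∀ t : PGLine F, pgMem R t → pgMem N t → nsec S t ≠ 1) ∧
    -- (2)
    (3 ≤ k → ∃ C : PGPoint F, pgMem C ℓ ∧
      ∀ P ∈ S, pgMem P m → ∀ t : PGLine F, pgMem P t → nsec S t = 1 → pgMem C t) ∧
    -- (3)
    (((a : ℚ) - 1) / 2 < (k : ℚ) →
      (k = a ∧ pgMem N m) ∨ ((k : ℤ) = ⌈(a : ℚ) / 2⌉ ∧ ¬ pgMem N m)) := by
  classical
  have : Fintype (PGPoint F) := Fintype.ofFinite _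
  subst hcard hℓ hk
  have hc := nucleusConfig_of_semioval hS ha hsize hN
  have hNS := nucleus_notMem hS ha hN
  have hD : #(infinitePart S ℓ) = nsec S ℓ := by rw [nsec_eq_card, infinitePart]
  have hD2 : 2 < #(infinitePart S ℓ) := hD ▸ ha
  refine ⟨fun R hR hRℓ hRN t hRt hNt ht => ?_, hc.exists_carrier hNS hD2 hm, fun hlt => ?_⟩
  · exact hc.nucleus_notMem_tangent hD2 (mem_affinePart.mpr (Or.inr ⟨hR, hRℓ⟩)) hRN
      ((isTangentAt_iff hNS hR hRℓ).mpr ⟨hRt, ht⟩) hNt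
  · have hle : nsec S ℓ ≤ 2 * nsec S m := by
      have h1 : (nsec S ℓ : ℚ) < 2 * nsec S m + 1 := by linarith
      have h2 : nsec S ℓ < 2 * nsec S m + 1 := by exact_mod_cast h1
      omega
    have hor := hc.nsec_eq_or hNS hD2 hm (hD ▸ hle)
    rw [hD] at hor
    exact hor.imp_right fun h => ⟨eq_ceil_half hle h.1, h.2⟩
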